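/- arXiv:1604.07245 — 3 statements merged into one kernel-verified Lean document; each statement's English description precedes it below -/
import Mathlib

section
/- ∫₀^{2π/3} (2 + cos t)/√((1 + cos t)(1 + 2cos t)) dt = √2 · π. (Consequently the surface-area integral 2√2 ∫₀^{2π/3} (2 + cos t)/√((1 + cos t)(1 + 2cos t)) dt equals 4π.) -/
open Real

/-!
With `t = 2x` and `α = π / 3`, the radicand becomes `8 cos² x (sin² α - sin² x)` and the numerator
`1 + 2 cos² x`, so the integrand splits into multiples of `cos x / √(sin² α - sin² x)` and
`1 / (cos x √(sin² α - sin² x))`. These are, up to a factor `cos α` for the second, the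
derivatives of `arcsin (sin x / sin α)` and `arcsin (tan x / tan α)`, each of which rises from `0`
to `π / 2` on `[0, α]`.
-/

section Arcsin

variable {f f' : ℝ → ℝ} {a b c : ℝ}

lemma hasDerivAt_arcsin_div_const {m x : ℝ} (hf : HasDerivAt f m x) (hlt : |f x| < c) :
    HasDerivAt (fun y ↦ arcsin (f y / c)) (m / √(c ^ 2 - f x ^ 2)) x := by
  have hc : 0 < c := (abs_nonneg _).trans_lt hlt
  obtain ⟨hneg, hpos⟩ := abs_lt.1 hlt
  have hne_neg_one : f x / c ≠ -1 := by
    rw [Ne, div_eq_iff hc.ne']; linarith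
  have hne_one : f x / c ≠ 1 := by
    rw [Ne, div_eq_iff hc.ne']; linarith
  have hsqrt : √(1 - (f x / c) ^ 2) = √(c ^ 2 - f x ^ 2) / c := by
    rw [show 1 - (f x / c) ^ 2 = (c ^ 2 - f x ^ 2) / c ^ 2 by field_simp,
      sqrt_div' _ (sq_nonneg c), sqrt_sq hc.le]
  refine ((hasDerivAt_arcsin hne_neg_one hne_one).comp x (hf.div_const c)).congr_deriv ?_
  rw [hsqrt]
  field_simp

lemma continuousOn_arcsin_div_const {s : Set ℝ} (hf : ContinuousOn f s) :
    ContinuousOn (fun x ↦ arcsin (f x / c)) s :=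
  continuous_arcsin.comp_continuousOn (hf.div_const c)

lemma intervalIntegrable_deriv_div_sqrt_sq_sub_sq (hab : a ≤ b)
    (hcont : ContinuousOn f (Set.Icc a b)) (hderiv : ∀ x ∈ Set.Ioo a b, HasDerivAt f (f' x) x)
    (hnonneg : ∀ x ∈ Set.Ioo a b, 0 ≤ f' x) (hlt : ∀ x ∈ Set.Ioo a b, |f x| < c) :
    IntervalIntegrable (fun x ↦ f' x / √(c ^ 2 - f x ^ 2)) MeasureTheory.volume a b :=
  (intervalIntegrable_iff_integrableOn_Ioc_of_le hab).2 <|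
    intervalIntegral.integrableOn_deriv_of_nonneg (continuousOn_arcsin_div_const hcont)
      (fun x hx ↦ hasDerivAt_arcsin_div_const (hderiv x hx) (hlt x hx))
      fun x hx ↦ div_nonneg (hnonneg x hx) (sqrt_nonneg _)

lemma integral_deriv_div_sqrt_sq_sub_sq (hab : a ≤ b)
    (hcont : ContinuousOn f (Set.Icc a b)) (hderiv : ∀ x ∈ Set.Ioo a b, HasDerivAt f (f' x) x)
    (hnonneg : ∀ x ∈ Set.Ioo a b, 0 ≤ f' x) (hlt : ∀ x ∈ Set.Ioo a b, |f x| < c) :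
    ∫ x in a..b, f' x / √(c ^ 2 - f x ^ 2) = arcsin (f b / c) - arcsin (f a / c) :=
  intervalIntegral.integral_eq_sub_of_hasDerivAt_of_le hab (continuousOn_arcsin_div_const hcont)
    (fun x hx ↦ hasDerivAt_arcsin_div_const (hderiv x hx) (hlt x hx))
    (intervalIntegrable_deriv_div_sqrt_sq_sub_sq hab hcont hderiv hnonneg hlt)

end Arcsin

section Trigonometric

variable {α x : ℝ}

lemma cos_pos_of_nonneg_of_lt_pi_div_two (h0 : 0 ≤ x) (hx : x < π / 2) : 0 < cos x :=
  cos_pos_of_mem_Ioo ⟨by linarith [pi_pos], hx⟩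

lemma abs_sin_lt_sin (h0 : 0 ≤ x) (hx : x < α) (hα : α ≤ π / 2) : |sin x| < sin α := by
  rw [abs_of_nonneg (sin_nonneg_of_nonneg_of_le_pi h0 (by linarith))]
  exact sin_lt_sin_of_lt_of_le_pi_div_two (by linarith) hα hx

lemma abs_tan_lt_tan (h0 : 0 ≤ x) (hx : x < α) (hα : α < π / 2) : |tan x| < tan α := by
  rw [abs_of_nonneg (tan_nonneg_of_nonneg_of_le_pi_div_two h0 (hx.trans hα).le)]
  exact tan_lt_tan_of_nonneg_of_lt_pi_div_two h0 hα hx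

lemma sqrt_tan_sq_sub_tan_sq (hα : 0 < cos α) (hx : 0 < cos x) :
    √(tan α ^ 2 - tan x ^ 2) = √(sin α ^ 2 - sin x ^ 2) / (cos α * cos x) := by
  have hdiff : tan α ^ 2 - tan x ^ 2 = (sin α ^ 2 - sin x ^ 2) / (cos α * cos x) ^ 2 := by
    rw [tan_eq_sin_div_cos, tan_eq_sin_div_cos]
    field_simp
    rw [cos_sq', cos_sq']
    ring
  rw [hdiff, sqrt_div' _ (sq_nonneg _), sqrt_sq (by positivity)]

lemma sqrt_one_add_cos_mul_cos_sub_cos_two_mul (hx : 0 ≤ cos x) :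
    √((1 + cos (2 * x)) * (cos (2 * x) - cos (2 * α))) =
      2 * cos x * √(sin α ^ 2 - sin x ^ 2) := by
  have hfactor : (1 + cos (2 * x)) * (cos (2 * x) - cos (2 * α)) =
      (2 * cos x) ^ 2 * (sin α ^ 2 - sin x ^ 2) := by
    rw [cos_two_mul x, cos_two_mul α, sin_sq, sin_sq]
    ring
  rw [hfactor, sqrt_mul (sq_nonneg _), sqrt_sq (by positivity)]

end Trigonometric

section Integrals

variable {α : ℝ}

lemma intervalIntegrable_cos_div_sqrt_sin_sq_sub_sin_sq (h0 : 0 ≤ α) (hα : α ≤ π / 2) :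
    IntervalIntegrable (fun x ↦ cos x / √(sin α ^ 2 - sin x ^ 2)) MeasureTheory.volume 0 α :=
  intervalIntegrable_deriv_div_sqrt_sq_sub_sq h0 continuousOn_sin (fun x _ ↦ hasDerivAt_sin x)
    (fun _ hx ↦ (cos_pos_of_nonneg_of_lt_pi_div_two hx.1.le (hx.2.trans_le hα)).le)
    fun _ hx ↦ abs_sin_lt_sin hx.1.le hx.2 hα

lemma integral_cos_div_sqrt_sin_sq_sub_sin_sq (h0 : 0 < α) (hα : α ≤ π / 2) :
    ∫ x in 0..α, cos x / √(sin α ^ 2 - sin x ^ 2) = π / 2 := by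
  have hsin : sin α ≠ 0 := (sin_pos_of_pos_of_lt_pi h0 (by linarith)).ne'
  rw [integral_deriv_div_sqrt_sq_sub_sq h0.le continuousOn_sin (fun x _ ↦ hasDerivAt_sin x)
    (fun _ hx ↦ (cos_pos_of_nonneg_of_lt_pi_div_two hx.1.le (hx.2.trans_le hα)).le)
    fun _ hx ↦ abs_sin_lt_sin hx.1.le hx.2 hα]
  simp [hsin]

lemma continuousOn_tan_Icc_zero (hα : α < π / 2) : ContinuousOn tan (Set.Icc 0 α) :=
  continuousOn_tan_Ioo.mono fun _ hx ↦ ⟨by linarith [hx.1, pi_pos], hx.2.trans_lt hα⟩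

lemma hasDerivAt_tan_of_mem_Ioo_zero (hα : α < π / 2) :
    ∀ x ∈ Set.Ioo 0 α, HasDerivAt tan (1 / cos x ^ 2) x := fun _ hx ↦
  hasDerivAt_tan (cos_pos_of_nonneg_of_lt_pi_div_two hx.1.le (hx.2.trans hα)).ne'

lemma eqOn_inv_cos_mul_one_div_cos_sq_div_sqrt (h0 : 0 ≤ α) (hα : α < π / 2) :
    Set.EqOn (fun x ↦ (cos α)⁻¹ * (1 / cos x ^ 2 / √(tan α ^ 2 - tan x ^ 2)))
      (fun x ↦ 1 / (cos x * √(sin α ^ 2 - sin x ^ 2))) (Set.uIcc 0 α) := by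
  intro x hx
  rw [Set.uIcc_of_le h0] at hx
  have hcosα : 0 < cos α := cos_pos_of_nonneg_of_lt_pi_div_two h0 hα
  have hcosx : 0 < cos x := cos_pos_of_nonneg_of_lt_pi_div_two hx.1 (hx.2.trans_lt hα)
  simp only [sqrt_tan_sq_sub_tan_sq hcosα hcosx]
  field_simp

lemma intervalIntegrable_one_div_cos_mul_sqrt_sin_sq_sub_sin_sq (h0 : 0 ≤ α) (hα : α < π / 2) :
    IntervalIntegrable (fun x ↦ 1 / (cos x * √(sin α ^ 2 - sin x ^ 2)))
      MeasureTheory.volume 0 α := by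
  have htan := intervalIntegrable_deriv_div_sqrt_sq_sub_sq h0 (continuousOn_tan_Icc_zero hα)
    (hasDerivAt_tan_of_mem_Ioo_zero hα) (fun _ _ ↦ by positivity)
    fun _ hx ↦ abs_tan_lt_tan hx.1.le hx.2 hα
  exact (htan.const_mul (cos α)⁻¹).congr
    ((eqOn_inv_cos_mul_one_div_cos_sq_div_sqrt h0 hα).mono Set.uIoc_subset_uIcc)

lemma integral_one_div_cos_mul_sqrt_sin_sq_sub_sin_sq (h0 : 0 < α) (hα : α < π / 2) :
    ∫ x in 0..α, 1 / (cos x * √(sin α ^ 2 - sin x ^ 2)) = π / (2 * cos α) := by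
  have htan : tan α ≠ 0 := (tan_pos_of_pos_of_lt_pi_div_two h0 hα).ne'
  rw [← intervalIntegral.integral_congr (eqOn_inv_cos_mul_one_div_cos_sq_div_sqrt h0.le hα),
    intervalIntegral.integral_const_mul,
    integral_deriv_div_sqrt_sq_sub_sq h0.le (continuousOn_tan_Icc_zero hα)
      (hasDerivAt_tan_of_mem_Ioo_zero hα) (fun _ _ ↦ by positivity)
      fun _ hx ↦ abs_tan_lt_tan hx.1.le hx.2 hα,
    div_self htan, tan_zero, zero_div, arcsin_one, arcsin_zero]
  ring

lemma eqOn_add_mul_one_add_cos_two_mul_div_sqrt (h0 : 0 ≤ α) (hα : α < π / 2) (p q : ℝ) :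
    Set.EqOn
      (fun x ↦ (p + q * (1 + cos (2 * x))) /
        √((1 + cos (2 * x)) * (cos (2 * x) - cos (2 * α))))
      (fun x ↦ p / 2 * (1 / (cos x * √(sin α ^ 2 - sin x ^ 2))) +
        q * (cos x / √(sin α ^ 2 - sin x ^ 2))) (Set.uIcc 0 α) := by
  intro x hx
  rw [Set.uIcc_of_le h0] at hx
  have hcos : 0 < cos x := cos_pos_of_nonneg_of_lt_pi_div_two hx.1 (hx.2.trans_lt hα)
  have hnum : p + q * (1 + cos (2 * x)) = p + 2 * q * cos x ^ 2 := by
    rw [cos_two_mul]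
    ring
  simp only [sqrt_one_add_cos_mul_cos_sub_cos_two_mul hcos.le, hnum]
  field_simp

lemma integral_add_mul_one_add_cos_div_sqrt (h0 : 0 < α) (hα : α < π / 2) (p q : ℝ) :
    ∫ t in 0..2 * α, (p + q * (1 + cos t)) / √((1 + cos t) * (cos t - cos (2 * α))) =
      π * (p / (2 * cos α) + q) := by
  have hsplit := eqOn_add_mul_one_add_cos_two_mul_div_sqrt h0.le hα p q
  have hhalf := intervalIntegral.mul_integral_comp_mul_left (a := 0) (b := α)
    (f := fun t ↦ (p + q * (1 + cos t)) / √((1 + cos t) * (cos t - cos (2 * α)))) 2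
  rw [mul_zero] at hhalf
  rw [← hhalf, intervalIntegral.integral_congr hsplit, intervalIntegral.integral_add
      ((intervalIntegrable_one_div_cos_mul_sqrt_sin_sq_sub_sin_sq h0.le hα).const_mul _)
      ((intervalIntegrable_cos_div_sqrt_sin_sq_sub_sin_sq h0.le hα.le).const_mul _),
    intervalIntegral.integral_const_mul, intervalIntegral.integral_const_mul,
    integral_one_div_cos_mul_sqrt_sin_sq_sub_sin_sq h0 hα,
    integral_cos_div_sqrt_sin_sq_sub_sin_sq h0 hα.le]
  ring

end Integrals

/-- `∫₀^{2π/3} (2 + cos t)/√((1 + cos t)(1 + 2cos t)) dt = √2 · π`. -/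
theorem integral_surface_oloid :
    ∫ t in (0:ℝ)..(2 * π / 3),
      (2 + Real.cos t) / Real.sqrt ((1 + Real.cos t) * (1 + 2 * Real.cos t))
      = Real.sqrt 2 * π := by
  have hcos : cos (2 * (π / 3)) = -1 / 2 := by
    rw [cos_two_mul, cos_pi_div_three]; norm_num
  have hintegrand (t : ℝ) : (2 + cos t) / √((1 + cos t) * (1 + 2 * cos t)) =
      (√2)⁻¹ * ((1 + 1 * (1 + cos t)) / √((1 + cos t) * (cos t - cos (2 * (π / 3))))) := by
    rw [show (1 + cos t) * (1 + 2 * cos t) =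
        2 * ((1 + cos t) * (cos t - cos (2 * (π / 3)))) by rw [hcos]; ring,
      sqrt_mul zero_le_two]
    ring
  calc ∫ t in (0:ℝ)..(2 * π / 3), (2 + cos t) / √((1 + cos t) * (1 + 2 * cos t))
      = (√2)⁻¹ * (π * (1 / (2 * cos (π / 3)) + 1)) := by
        simp only [hintegrand]
        rw [intervalIntegral.integral_const_mul, mul_div_assoc,
          integral_add_mul_one_add_cos_div_sqrt (by positivity) (by linarith [pi_pos])]
    _ = √2 * π := by
        rw [cos_pi_div_three]
        field_simp
        norm_num
end

section
/- ∫₀^{2π/3} √(1 + 2cos t)/(1 + cos t)² dt = (1/3)·[ K(√3/2) + 2E(√3/2) ]. -/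
open Real

noncomputable section

/-- Complete elliptic integral of the first kind `K(k)`. -/
def ellipticK (k : ℝ) : ℝ := ∫ x in (0:ℝ)..(π/2), 1 / Real.sqrt (1 - k^2 * Real.sin x ^ 2)

/-- Complete elliptic integral of the second kind `E(k)`. -/
def ellipticE (k : ℝ) : ℝ := ∫ x in (0:ℝ)..(π/2), Real.sqrt (1 - k^2 * Real.sin x ^ 2)

/-!
Replace the endpoint `2π/3` by `2α`, so that the modulus becomes `k = sin α`, and write
`Δ = √(1 - k² sin² x)`. The substitution `tan (t / 2) = tan α * cos x` carries `[0, 2α]` to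
`[0, π/2]` with orientation reversed and turns
`√(2 (cos t - cos 2α)) / (1 + cos t)² dt` into `-tan² α * sin² x * Δ dx`. Since
`sin x * cos x * Δ` vanishes at both ends of `[0, π/2]`, its derivative integrates to `0`, which
expresses `∫ sin² x * Δ dx` through `K(k)` and `E(k)`.
-/

/-- Legendre's delta amplitude `Δ(x) = √(1 - k² sin² x)` of modulus `k`: the integrand of
`ellipticE k`, and the reciprocal of the integrand of `ellipticK k`. -/
def ellipticDelta (k x : ℝ) : ℝ := √(1 - k ^ 2 * sin x ^ 2)

section EllipticDelta

variable {k : ℝ}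

lemma continuous_ellipticDelta (k : ℝ) : Continuous (ellipticDelta k) := by
  unfold ellipticDelta
  fun_prop

lemma one_sub_sq_mul_sin_sq_pos (hk : k ^ 2 < 1) (x : ℝ) : 0 < 1 - k ^ 2 * sin x ^ 2 := by
  nlinarith [sin_sq_le_one x, sq_nonneg k]

lemma ellipticDelta_pos (hk : k ^ 2 < 1) (x : ℝ) : 0 < ellipticDelta k x :=
  sqrt_pos.2 (one_sub_sq_mul_sin_sq_pos hk x)

lemma ellipticDelta_sq (hk : k ^ 2 < 1) (x : ℝ) :
    ellipticDelta k x ^ 2 = 1 - k ^ 2 * sin x ^ 2 :=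
  sq_sqrt (one_sub_sq_mul_sin_sq_pos hk x).le

lemma hasDerivAt_ellipticDelta (hk : k ^ 2 < 1) (x : ℝ) :
    HasDerivAt (ellipticDelta k) (-(k ^ 2 * sin x * cos x) / ellipticDelta k x) x := by
  have hradicand :
      HasDerivAt (fun y ↦ 1 - k ^ 2 * sin y ^ 2) (-(k ^ 2 * (2 * sin x * cos x))) x := by
    simpa using (((hasDerivAt_sin x).pow 2).const_mul (k ^ 2)).const_sub 1
  refine (hradicand.sqrt (one_sub_sq_mul_sin_sq_pos hk x).ne').congr_deriv ?_
  change _ / (2 * ellipticDelta k x) = _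
  have := (ellipticDelta_pos hk x).ne'
  field_simp

lemma hasDerivAt_sq_mul_sin_mul_cos_mul_ellipticDelta (hk : k ^ 2 < 1) (x : ℝ) :
    HasDerivAt (fun y ↦ k ^ 2 * (sin y * cos y * ellipticDelta k y))
      ((1 - k ^ 2) * (1 / ellipticDelta k x) + (2 * k ^ 2 - 1) * ellipticDelta k x
        - 3 * k ^ 2 * (sin x ^ 2 * ellipticDelta k x)) x := by
  refine ((((hasDerivAt_sin x).mul (hasDerivAt_cos x)).mul
    (hasDerivAt_ellipticDelta hk x)).const_mul (k ^ 2)).congr_deriv ?_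
  have hΔ := (ellipticDelta_pos hk x).ne'
  simp only [Pi.mul_apply]
  field_simp
  rw [ellipticDelta_sq hk, cos_sq']
  ring

lemma three_mul_sq_mul_integral_sin_sq_mul_ellipticDelta (hk : k ^ 2 < 1) :
    3 * k ^ 2 * ∫ x in (0 : ℝ)..(π / 2), sin x ^ 2 * ellipticDelta k x
      = (1 - k ^ 2) * ellipticK k + (2 * k ^ 2 - 1) * ellipticE k := by
  have hE := continuous_ellipticDelta k
  have hK : Continuous fun x ↦ 1 / ellipticDelta k x :=
    continuous_const.div hE fun x ↦ (ellipticDelta_pos hk x).ne'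
  have hint {f : ℝ → ℝ} (hf : Continuous f) :
      IntervalIntegrable f MeasureTheory.volume 0 (π / 2) := hf.intervalIntegrable _ _
  have hzero := intervalIntegral.integral_eq_sub_of_hasDerivAt (a := 0) (b := π / 2)
    (fun x _ ↦ hasDerivAt_sq_mul_sin_mul_cos_mul_ellipticDelta hk x) (hint (by fun_prop))
  rw [intervalIntegral.integral_sub (hint (by fun_prop)) (hint (by fun_prop)),
    intervalIntegral.integral_add (hint (by fun_prop)) (hint (by fun_prop))] at hzero
  simp only [intervalIntegral.integral_const_mul, sin_zero, cos_pi_div_two, mul_zero, zero_mul,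
    sub_zero] at hzero
  exact (sub_eq_zero.1 hzero).symm

end EllipticDelta

/-- The angle `t ∈ (-π, π)` with `tan (t / 2) = tan α * cos x`, which decreases from `2 * α` to `0`
as `x` runs from `0` to `π / 2` when `0 < α < π / 2`. -/
def halfAngleSubst (α x : ℝ) : ℝ := 2 * arctan (tan α * cos x)

section HalfAngleSubst

variable {α : ℝ}

lemma halfAngleSubst_zero (hα₁ : -(π / 2) < α) (hα₂ : α < π / 2) :
    halfAngleSubst α 0 = 2 * α := by
  rw [halfAngleSubst, cos_zero, mul_one, arctan_tan hα₁ hα₂]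

lemma halfAngleSubst_pi_div_two (α : ℝ) : halfAngleSubst α (π / 2) = 0 := by
  simp [halfAngleSubst]

lemma sin_sq_lt_one_of_cos_ne_zero (hα : cos α ≠ 0) : sin α ^ 2 < 1 := by
  rw [sin_sq]
  exact sub_lt_self 1 (sq_pos_of_ne_zero hα)

lemma one_add_tan_mul_cos_sq (hα : cos α ≠ 0) (x : ℝ) :
    1 + (tan α * cos x) ^ 2 = ellipticDelta (sin α) x ^ 2 / cos α ^ 2 := by
  rw [ellipticDelta_sq (sin_sq_lt_one_of_cos_ne_zero hα), tan_eq_sin_div_cos]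
  field_simp
  rw [cos_sq' x, cos_sq' α]
  ring

lemma one_add_cos_halfAngleSubst (hα : cos α ≠ 0) (x : ℝ) :
    1 + cos (halfAngleSubst α x) = 2 * cos α ^ 2 / ellipticDelta (sin α) x ^ 2 := by
  rw [halfAngleSubst, cos_two_mul, cos_sq_arctan, one_add_tan_mul_cos_sq hα, one_div_div]
  ring

lemma two_mul_cos_halfAngleSubst_sub_cos (hα : cos α ≠ 0) (x : ℝ) :
    2 * (cos (halfAngleSubst α x) - cos (2 * α))
      = (2 * sin α * cos α * sin x / ellipticDelta (sin α) x) ^ 2 := by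
  have hk := sin_sq_lt_one_of_cos_ne_zero hα
  have hΔ := (ellipticDelta_pos hk x).ne'
  have hcos : cos (halfAngleSubst α x) - cos (2 * α)
      = 2 * cos α ^ 2 / ellipticDelta (sin α) x ^ 2 - 2 * cos α ^ 2 := by
    rw [← one_add_cos_halfAngleSubst hα, cos_two_mul]
    ring
  rw [hcos]
  field_simp
  rw [ellipticDelta_sq hk]
  ring

lemma hasDerivAt_halfAngleSubst (hα : cos α ≠ 0) (x : ℝ) :
    HasDerivAt (halfAngleSubst α)
      (-(2 * sin α * cos α * sin x / ellipticDelta (sin α) x ^ 2)) x := by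
  refine (((hasDerivAt_cos x).const_mul (tan α)).arctan.const_mul 2).congr_deriv ?_
  have hΔ := (ellipticDelta_pos (sin_sq_lt_one_of_cos_ne_zero hα) x).ne'
  rw [one_add_tan_mul_cos_sq hα, tan_eq_sin_div_cos]
  field_simp

lemma integrand_comp_halfAngleSubst_mul_deriv (hsin : 0 ≤ sin α) (hcos : 0 < cos α) {x : ℝ}
    (hx : 0 ≤ sin x) :
    √(2 * (cos (halfAngleSubst α x) - cos (2 * α))) / (1 + cos (halfAngleSubst α x)) ^ 2
        * -(2 * sin α * cos α * sin x / ellipticDelta (sin α) x ^ 2)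
      = -(tan α ^ 2 * (sin x ^ 2 * ellipticDelta (sin α) x)) := by
  have hΔ := ellipticDelta_pos (sin_sq_lt_one_of_cos_ne_zero hcos.ne') x
  rw [two_mul_cos_halfAngleSubst_sub_cos hcos.ne', sqrt_sq (by positivity),
    one_add_cos_halfAngleSubst hcos.ne', tan_eq_sin_div_cos]
  field_simp

lemma integral_sqrt_cos_sub_cos_eq_tan_sq_mul_integral (hα₀ : 0 ≤ α) (hα : α < π / 2) :
    ∫ t in (0 : ℝ)..(2 * α), √(2 * (cos t - cos (2 * α))) / (1 + cos t) ^ 2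
      = tan α ^ 2 * ∫ x in (0 : ℝ)..(π / 2), sin x ^ 2 * ellipticDelta (sin α) x := by
  have hsin : 0 ≤ sin α := sin_nonneg_of_nonneg_of_le_pi hα₀ (by linarith [pi_pos])
  have hcos : 0 < cos α := cos_pos_of_mem_Ioo ⟨by linarith [pi_pos], hα⟩
  have hΔ := ellipticDelta_pos (sin_sq_lt_one_of_cos_ne_zero hcos.ne')
  have hderiv := hasDerivAt_halfAngleSubst hcos.ne'
  have hsubst := intervalIntegral.integral_comp_mul_deriv'' (a := 0) (b := π / 2)
    (g := fun t ↦ √(2 * (cos t - cos (2 * α))) / (1 + cos t) ^ 2)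
    (fun x _ ↦ (hderiv x).continuousAt.continuousWithinAt)
    (fun x _ ↦ (hderiv x).hasDerivWithinAt)
    (by
      have hΔcont := continuous_ellipticDelta (sin α)
      exact (Continuous.div (by fun_prop) (by fun_prop)
        fun x ↦ pow_ne_zero 2 (hΔ x).ne').neg.continuousOn)
    (by
      rintro _ ⟨x, -, rfl⟩
      refine (ContinuousAt.div (by fun_prop) (by fun_prop) ?_).continuousWithinAt
      rw [one_add_cos_halfAngleSubst hcos.ne']
      have := hΔ x
      positivity)
  rw [halfAngleSubst_zero (by linarith [pi_pos]) hα, halfAngleSubst_pi_div_two] at hsubst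
  rw [intervalIntegral.integral_symm, ← hsubst, ← intervalIntegral.integral_neg,
    ← intervalIntegral.integral_const_mul]
  refine intervalIntegral.integral_congr fun x hx ↦ ?_
  rw [Set.uIcc_of_le (by positivity)] at hx
  have hsinx : 0 ≤ sin x := sin_nonneg_of_nonneg_of_le_pi hx.1 (by linarith [hx.2, pi_pos])
  exact neg_eq_iff_eq_neg.2 (integrand_comp_halfAngleSubst_mul_deriv hsin hcos hsinx)

end HalfAngleSubst

theorem integral_volume_oloid_general {α : ℝ} (hα₀ : 0 ≤ α) (hα : α < π / 2) :
    ∫ t in (0 : ℝ)..(2 * α), √(2 * (cos t - cos (2 * α))) / (1 + cos t) ^ 2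
      = (1 / 3) * (ellipticK (sin α) + (tan α ^ 2 - 1) * ellipticE (sin α)) := by
  have hcos : cos α ≠ 0 := (cos_pos_of_mem_Ioo ⟨by linarith [pi_pos], hα⟩).ne'
  have hparts := three_mul_sq_mul_integral_sin_sq_mul_ellipticDelta
    (sin_sq_lt_one_of_cos_ne_zero hcos)
  rw [integral_sqrt_cos_sub_cos_eq_tan_sq_mul_integral hα₀ hα, tan_eq_sin_div_cos]
  field_simp
  rw [cos_sq']
  linear_combination hparts

/-- `∫₀^{2π/3} √(1 + 2cos t)/(1 + cos t)² dt = (1/3)·[K(√3/2) + 2E(√3/2)]`. -/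
theorem integral_volume_oloid :
    ∫ t in (0:ℝ)..(2 * π / 3), Real.sqrt (1 + 2 * Real.cos t) / (1 + Real.cos t) ^ 2
      = (1 / 3) * (ellipticK (Real.sqrt 3 / 2) + 2 * ellipticE (Real.sqrt 3 / 2)) := by
  have hradicand (t : ℝ) : 2 * (cos t - cos (2 * (π / 3))) = 1 + 2 * cos t := by
    rw [cos_two_mul, cos_pi_div_three]
    ring
  have hcoeff : tan (π / 3) ^ 2 - 1 = 2 := by
    rw [tan_pi_div_three, sq_sqrt] <;> norm_num
  have h := integral_volume_oloid_general (α := π / 3) (by positivity) (by linarith [pi_pos])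
  simpa only [hradicand, hcoeff, sin_pi_div_three, mul_div_assoc] using h
end
end

section
/- ∫₀^{2π/3} arccos( −cos t/(1 + cos t) ) dt = 3π²/4 − 2I, where I = ∫₀^{π/2} arccos( cos t/(1 + cos t) ) dt. Equivalently, ∫_{−2π/3}^{2π/3} arccos( −cos t/(1 + cos t) ) dt = 3π²/2 − 4I. -/
open Real

noncomputable section

/-- The constant `I = ∫₀^{π/2} arccos(cos x/(1+cos x)) dx`. -/
def constI : ℝ := ∫ x in (0:ℝ)..(π/2), Real.arccos (Real.cos x / (1 + Real.cos x))

/-!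
The curve `(1 + cos t) (1 + cos s) = 1` is symmetric in `t` and `s`, and on `[0, 2π/3]` it is the
graph of `s = arccos (-cos t / (1 + cos t))`. So this function is an involution exchanging `0` and
`2π/3`, with fixed point `π/2`. The area formula for inverse functions expresses its integral over
`[π/2, 2π/3]` through the one over `[0, π/2]`, and the latter is `π²/2 - I` because
`arccos (-x) = π - arccos x`.
-/

open Set MeasureTheory

theorem continuousOn_image_of_leftInvOn_of_isCompact {X Y : Type*} [TopologicalSpace X]
    [TopologicalSpace Y] [T2Space Y] {f : X → Y} {g : Y → X} {K : Set X} (hK : IsCompact K)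
    (hf : ContinuousOn f K) (hgf : LeftInvOn g f K) : ContinuousOn g (f '' K) := by
  refine continuousOn_iff_isClosed.2 fun C hC ↦ ⟨f '' (K ∩ C), ?_, ?_⟩
  · exact ((hK.inter_right hC).image_of_continuousOn (hf.mono inter_subset_left)).isClosed
  · rw [inter_comm K, hgf.image_inter', inter_assoc, inter_self]

theorem integral_eq_sub_integral_of_leftInvOn {f f' g : ℝ → ℝ} {a b : ℝ}
    (hf : ContinuousOn f (uIcc a b))
    (hff' : ∀ x ∈ Ioo (min a b) (max a b), HasDerivAt f (f' x) x)
    (hf' : IntervalIntegrable f' volume a b) (hgf : LeftInvOn g f (uIcc a b)) :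
    ∫ y in f a..f b, g y = b * f b - a * f a - ∫ x in a..b, f x := by
  have hg : ContinuousOn g (f '' uIcc a b) :=
    continuousOn_image_of_leftInvOn_of_isCompact isCompact_uIcc hf hgf
  have hgf_mul : EqOn (fun x ↦ (g ∘ f) x * f' x) (fun x ↦ x * f' x) (uIcc a b) := fun x hx ↦ by
    simp only [Function.comp_apply, hgf hx]
  have hint : IntegrableOn (fun x ↦ (g ∘ f) x * f' x) (uIcc a b) :=
    (integrableOn_congr_fun hgf_mul measurableSet_uIcc).2 <|
      (intervalIntegrable_iff' enorm_ne_top).1 (hf'.continuousOn_mul continuousOn_id)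
  calc ∫ y in f a..f b, g y
      = ∫ x in a..b, (g ∘ f) x * f' x :=
        (intervalIntegral.integral_comp_mul_deriv''' hf
          (fun x hx ↦ (hff' x hx).hasDerivWithinAt)
          (hg.mono (image_mono Ioo_subset_Icc_self))
          (hg.integrableOn_compact (isCompact_uIcc.image_of_continuousOn hf)) hint).symm
    _ = ∫ x in a..b, x * f' x := intervalIntegral.integral_congr hgf_mul
    _ = b * f b - a * f a - ∫ x in a..b, 1 * f x :=
        intervalIntegral.integral_mul_deriv_eq_deriv_mul_of_hasDerivAt continuousOn_id hf
          (fun x _ ↦ hasDerivAt_id x) hff' intervalIntegrable_const hf'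
    _ = b * f b - a * f a - ∫ x in a..b, f x := by simp only [one_mul]

theorem integral_neg_self_of_even {E : Type*} [NormedAddCommGroup E] [NormedSpace ℝ E]
    {f : ℝ → E} {a : ℝ} (hf : Function.Even f) (hfi : IntervalIntegrable f volume 0 a) :
    ∫ x in -a..a, f x = (2 : ℝ) • ∫ x in 0..a, f x := by
  have hreflect : ∫ x in -a..0, f x = ∫ x in 0..a, f x := by
    simpa only [hf _, neg_zero] using (intervalIntegral.integral_comp_neg (a := 0) (b := a) f).symm
  have hfi_neg : IntervalIntegrable f volume (-a) 0 := by
    simpa only [hf _, neg_zero] using ((IntervalIntegrable.iff_comp_neg enorm_ne_top).1 hfi).symm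
  rw [← intervalIntegral.integral_add_adjacent_intervals hfi_neg hfi, hreflect, two_smul]

theorem cos_two_pi_div_three : cos (2 * π / 3) = -(1 / 2) := by
  rw [show 2 * π / 3 = π - π / 3 by ring, cos_pi_sub, cos_pi_div_three]

theorem neg_half_le_cos_of_mem_Icc {t : ℝ} (ht : t ∈ Icc 0 (2 * π / 3)) : -(1 / 2) ≤ cos t := by
  rw [← cos_two_pi_div_three]
  exact cos_le_cos_of_nonneg_of_le_pi ht.1 (by linarith [pi_pos]) ht.2

/-- The solution `s ∈ [0, π]` of `(1 + cos t) (1 + cos s) = 1`, which exists when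
`-1/2 ≤ cos t`; for other `t` the value comes from `arccos` being constant outside `[-1, 1]` and
from `x / 0 = 0`. -/
def edgeAngle (t : ℝ) : ℝ := arccos (-cos t / (1 + cos t))

theorem even_edgeAngle : Function.Even edgeAngle := fun t ↦ by
  simp only [edgeAngle, cos_neg]

theorem edgeAngle_eq_pi_sub (t : ℝ) : edgeAngle t = π - arccos (cos t / (1 + cos t)) := by
  rw [edgeAngle, neg_div, arccos_neg]

theorem edgeAngle_zero : edgeAngle 0 = 2 * π / 3 := by
  refine arccos_eq_of_eq_cos (by positivity) (by linarith [pi_pos]) ?_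
  rw [cos_zero, cos_two_pi_div_three]
  norm_num

theorem edgeAngle_pi_div_two : edgeAngle (π / 2) = π / 2 := by
  simp [edgeAngle]

theorem cos_edgeAngle {t : ℝ} (ht : -(1 / 2) ≤ cos t) :
    cos (edgeAngle t) = -cos t / (1 + cos t) := by
  have hpos : 0 < 1 + cos t := by linarith
  refine cos_arccos ?_ ?_
  · rw [le_div_iff₀ hpos]
    linarith
  · rw [div_le_one hpos]
    linarith

theorem leftInvOn_edgeAngle : LeftInvOn edgeAngle edgeAngle (Icc 0 (2 * π / 3)) := by
  intro t ht
  have hcos := neg_half_le_cos_of_mem_Icc ht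
  have hpos : 0 < 1 + cos t := by linarith
  have hrecip : 1 + -cos t / (1 + cos t) = 1 / (1 + cos t) := by
    field_simp
    ring
  refine arccos_eq_of_eq_cos ht.1 (by linarith [ht.2, pi_pos]) ?_
  rw [cos_edgeAngle hcos, hrecip]
  field_simp

theorem continuousAt_edgeAngle {t : ℝ} (ht : 1 + cos t ≠ 0) : ContinuousAt edgeAngle t :=
  ContinuousAt.arccos (by fun_prop (disch := exact ht))

theorem continuousOn_edgeAngle : ContinuousOn edgeAngle (Icc 0 (2 * π / 3)) := fun t ht ↦
  (continuousAt_edgeAngle (by linarith [neg_half_le_cos_of_mem_Icc ht])).continuousWithinAt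

theorem hasDerivAt_edgeAngle {t : ℝ} (ht : -(1 / 2) < cos t) :
    HasDerivAt edgeAngle (-(sin t / ((1 + cos t) * √(1 + 2 * cos t)))) t := by
  have hpos : 0 < 1 + cos t := by linarith
  have hlower : -1 < -cos t / (1 + cos t) := by
    rw [lt_div_iff₀ hpos]
    linarith
  have hupper : -cos t / (1 + cos t) < 1 := by
    rw [div_lt_one hpos]
    linarith
  have hquot : HasDerivAt (fun t ↦ -cos t / (1 + cos t)) (sin t / (1 + cos t) ^ 2) t :=
    ((hasDerivAt_cos t).fun_neg.fun_div ((hasDerivAt_cos t).const_add 1) hpos.ne').congr_deriv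
      (by ring)
  have hsqrt : √(1 - (-cos t / (1 + cos t)) ^ 2) = √(1 + 2 * cos t) / (1 + cos t) := by
    have hsq : 1 - (-cos t / (1 + cos t)) ^ 2 = (1 + 2 * cos t) / (1 + cos t) ^ 2 := by
      field_simp
      ring
    rw [hsq, sqrt_div' _ (sq_nonneg _), sqrt_sq hpos.le]
  refine ((hasDerivAt_arccos hlower.ne' hupper.ne).comp t hquot).congr_deriv ?_
  rw [hsqrt]
  field_simp

theorem intervalIntegrable_edgeAngle {a b : ℝ} (ha : a ∈ Icc 0 (2 * π / 3))
    (hb : b ∈ Icc 0 (2 * π / 3)) : IntervalIntegrable edgeAngle volume a b :=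
  (continuousOn_edgeAngle.mono (uIcc_subset_Icc ha hb)).intervalIntegrable

theorem integral_edgeAngle_zero_pi_div_two :
    ∫ t in 0..π / 2, edgeAngle t = π ^ 2 / 2 - constI := by
  have hconstI : constI = ∫ t in 0..π / 2, (π - edgeAngle t) := by
    simp only [constI, edgeAngle_eq_pi_sub, sub_sub_cancel]
  have hint : IntervalIntegrable edgeAngle volume 0 (π / 2) :=
    intervalIntegrable_edgeAngle ⟨le_rfl, by positivity⟩ ⟨by positivity, by linarith [pi_pos]⟩
  rw [hconstI, intervalIntegral.integral_sub intervalIntegrable_const hint,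
    intervalIntegral.integral_const, smul_eq_mul]
  ring

theorem integral_edgeAngle_pi_div_two_two_pi_div_three :
    ∫ t in π / 2..2 * π / 3, edgeAngle t = (∫ t in 0..π / 2, edgeAngle t) - π ^ 2 / 4 := by
  have hcos {t : ℝ} (ht : t ∈ uIcc 0 (π / 2)) : 0 ≤ cos t := by
    rw [uIcc_of_le (by positivity)] at ht
    exact cos_nonneg_of_mem_Icc ⟨by linarith [ht.1, pi_pos], ht.2⟩
  have hsubset : uIcc 0 (π / 2) ⊆ Icc 0 (2 * π / 3) :=
    uIcc_subset_Icc ⟨le_rfl, by positivity⟩ ⟨by positivity, by linarith [pi_pos]⟩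
  have hderiv_cont : ContinuousOn (fun t ↦ -(sin t / ((1 + cos t) * √(1 + 2 * cos t))))
      (uIcc 0 (π / 2)) := by
    refine (continuousOn_sin.div (by fun_prop) fun t ht ↦ ?_).neg
    have := hcos ht
    positivity
  have harea := integral_eq_sub_integral_of_leftInvOn (continuousOn_edgeAngle.mono hsubset)
    (fun t ht ↦ hasDerivAt_edgeAngle (by linarith [hcos (Ioo_subset_Icc_self ht)]))
    hderiv_cont.intervalIntegrable (leftInvOn_edgeAngle.mono hsubset)
  rw [edgeAngle_zero, edgeAngle_pi_div_two] at harea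
  rw [intervalIntegral.integral_symm, harea]
  ring

/-- `∫₀^{2π/3} arccos(−cos t/(1 + cos t)) dt = 3π²/4 − 2I`, and equivalently
`∫_{−2π/3}^{2π/3} arccos(−cos t/(1 + cos t)) dt = 3π²/2 − 4I`. -/
theorem integral_arccos_edge :
    (∫ t in (0:ℝ)..(2 * π / 3), Real.arccos (-(Real.cos t) / (1 + Real.cos t))
      = 3 * π ^ 2 / 4 - 2 * constI) ∧
    (∫ t in (-(2 * π / 3))..(2 * π / 3), Real.arccos (-(Real.cos t) / (1 + Real.cos t))
      = 3 * π ^ 2 / 2 - 4 * constI) := by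
  change (∫ t in 0..2 * π / 3, edgeAngle t = _) ∧ (∫ t in -(2 * π / 3)..2 * π / 3, edgeAngle t = _)
  have hzero : 0 ∈ Icc 0 (2 * π / 3) := ⟨le_rfl, by positivity⟩
  have hmid : π / 2 ∈ Icc 0 (2 * π / 3) := ⟨by positivity, by linarith [pi_pos]⟩
  have hend : 2 * π / 3 ∈ Icc 0 (2 * π / 3) := ⟨by positivity, le_rfl⟩
  have hhalf : ∫ t in 0..2 * π / 3, edgeAngle t = 3 * π ^ 2 / 4 - 2 * constI := by
    rw [← intervalIntegral.integral_add_adjacent_intervals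
      (intervalIntegrable_edgeAngle hzero hmid) (intervalIntegrable_edgeAngle hmid hend),
      integral_edgeAngle_pi_div_two_two_pi_div_three, integral_edgeAngle_zero_pi_div_two]
    ring
  refine ⟨hhalf, ?_⟩
  rw [integral_neg_self_of_even even_edgeAngle (intervalIntegrable_edgeAngle hzero hend), hhalf,
    smul_eq_mul]
  ring
end
end
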